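/- Let (A,m) be a free multiarrangement with a locally heavy hyperplane H_0. Then the Euler restriction (A^{H_0}, m^*) (which equals the Euler–Ziegler restriction (A^{H_0}, m^{H_0}) since H_0 is locally heavy) is a free multiarrangement, and if exp(A,m) = (m(H_0), d_2, ..., d_ℓ) then exp(A^{H_0}, m^{H_0}) = (d_2, ..., d_ℓ). -/

import Mathlib

open scoped Classical
open MvPolynomial

namespace ArrPaper

variable {K : Type*} [Field K] {ℓ : ℕ}

/-- The coordinate ring `S = K[x₁,…,x_ℓ]`. -/
noncomputable abbrev S (K : Type*) [Field K] (ℓ : ℕ) := MvPolynomial (Fin ℓ) K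

/-- The linear form associated to a covector `c`. -/
noncomputable def linForm (c : Fin ℓ → K) : S K ℓ :=
  ∑ i, MvPolynomial.C (c i) * MvPolynomial.X i

/-- The linear functional associated to a covector. -/
noncomputable def toFunc (c : Fin ℓ → K) : (Fin ℓ → K) →ₗ[K] K :=
  ∑ i, c i • LinearMap.proj i

/-- A (central) hyperplane arrangement, given by a finite set of nonzero,
pairwise non-proportional covectors (defining linear forms). -/
structure Arrangement (K : Type*) [Field K] (ℓ : ℕ) where
  hyps : Finset (Fin ℓ → K)
  ne_zero : ∀ c ∈ hyps, c ≠ 0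
  nonparallel : ∀ c ∈ hyps, ∀ c' ∈ hyps, c ≠ c' → ∀ t : K, c' ≠ t • c

/-- Derivations of the polynomial ring `S`. -/
abbrev Der (K : Type*) [Field K] (ℓ : ℕ) := Derivation K (S K ℓ) (S K ℓ)

/-- `θ` is a logarithmic derivation of the multiarrangement `(A, m)`, i.e.
`θ(α_H) ∈ α_H^{m(H)}·S` for all `H ∈ A`. -/
def IsLogDer (A : Arrangement K ℓ) (m : (Fin ℓ → K) → ℕ) (θ : Der K ℓ) : Prop :=
  ∀ c ∈ A.hyps, (linForm c) ^ (m c) ∣ θ (linForm c)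

/-- `θ` is homogeneous of polynomial degree `d`: `θ(α)` is homogeneous of degree `d`
for every linear form `α`. -/
def IsHomogOfDeg (θ : Der K ℓ) (d : ℕ) : Prop :=
  ∀ c : Fin ℓ → K, (θ (linForm c)).IsHomogeneous d

/-- `θ₁, …, θ_ℓ` form a basis of the `S`-module `D(A,m)`. -/
def IsDerBasis (A : Arrangement K ℓ) (m : (Fin ℓ → K) → ℕ) (θ : Fin ℓ → Der K ℓ) : Prop :=
  (∀ i, IsLogDer A m (θ i)) ∧
  ∀ η : Der K ℓ, IsLogDer A m η → ∃! f : Fin ℓ → S K ℓ, η = ∑ i, f i • θ i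

/-- `(A,m)` is free with a homogeneous basis of degrees (exponents) `d`. -/
def IsFreeWithExp (A : Arrangement K ℓ) (m : (Fin ℓ → K) → ℕ) (d : Fin ℓ → ℕ) : Prop :=
  ∃ θ : Fin ℓ → Der K ℓ, (∀ i, IsHomogOfDeg (θ i) (d i)) ∧ IsDerBasis A m θ

/-- `(A,m)` is a free multiarrangement. -/
def IsFree (A : Arrangement K ℓ) (m : (Fin ℓ → K) → ℕ) : Prop :=
  ∃ d : Fin ℓ → ℕ, IsFreeWithExp A m d

/-- `|m|`, the total multiplicity. -/
def msum (A : Arrangement K ℓ) (m : (Fin ℓ → K) → ℕ) : ℕ := ∑ c ∈ A.hyps, m c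

/-- The rank of an arrangement: the dimension of the span of its covectors. -/
noncomputable def rank (A : Arrangement K ℓ) : ℕ :=
  Module.finrank K (Submodule.span K (A.hyps : Set (Fin ℓ → K)))

/-- `A` is reducible: after a linear change of coordinates it is a product of two
arrangements in complementary (nonzero) subspaces.  In terms of covectors: the
covectors split between two complementary nonzero subspaces of the dual space. -/
def Reducible (A : Arrangement K ℓ) : Prop :=
  ∃ W₁ W₂ : Submodule K (Fin ℓ → K), W₁ ≠ ⊥ ∧ W₂ ≠ ⊥ ∧ W₁ ⊓ W₂ = ⊥ ∧ W₁ ⊔ W₂ = ⊤ ∧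
    ∀ c ∈ A.hyps, c ∈ W₁ ∨ c ∈ W₂

/-- The hyperplanes of the localization at a flat; the flat of codimension `r` is
encoded by the `r`-dimensional subspace `U` of the dual space spanned by the
covectors of the hyperplanes containing it. -/
noncomputable def locHyps (A : Arrangement K ℓ) (U : Submodule K (Fin ℓ → K)) :
    Finset (Fin ℓ → K) :=
  A.hyps.filter (· ∈ U)

/-- `U` encodes a flat of `A` of codimension `r` (an element of `L_r(A)`). -/
def IsFlatOfRank (A : Arrangement K ℓ) (U : Submodule K (Fin ℓ → K)) (r : ℕ) : Prop :=
  Module.finrank K U = r ∧ Submodule.span K (locHyps A U : Set (Fin ℓ → K)) = U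

/-- The localization `A_X` of `A` at the flat encoded by `U`. -/
noncomputable def localize (A : Arrangement K ℓ) (U : Submodule K (Fin ℓ → K)) :
    Arrangement K ℓ where
  hyps := locHyps A U
  ne_zero := fun c hc => A.ne_zero c (Finset.mem_filter.mp hc).1
  nonparallel := fun c hc c' hc' =>
    A.nonparallel c (Finset.mem_filter.mp hc).1 c' (Finset.mem_filter.mp hc').1

/-- `H₀` (given by covector `c₀`) is a heavy hyperplane of `(A,m)`. -/
def IsHeavy (A : Arrangement K ℓ) (m : (Fin ℓ → K) → ℕ) (c₀ : Fin ℓ → K) : Prop :=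
  c₀ ∈ A.hyps ∧ (∑ c ∈ A.hyps.erase c₀, m c) ≤ m c₀

/-- `H₀` (given by covector `c₀`) is a locally heavy hyperplane of `(A,m)`. -/
def IsLocallyHeavy (A : Arrangement K ℓ) (m : (Fin ℓ → K) → ℕ) (c₀ : Fin ℓ → K) : Prop :=
  c₀ ∈ A.hyps ∧ ∀ U : Submodule K (Fin ℓ → K), IsFlatOfRank A U 2 → c₀ ∈ U →
    3 ≤ (locHyps A U).card → (∑ c ∈ (locHyps A U).erase c₀, m c) ≤ m c₀

/-- `b` is the second Betti number of the rank-2 localization of `(A,m)` at `U`: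
the product of the nonzero exponents of this free rank-2 multiarrangement. -/
def IsLocalB2 (A : Arrangement K ℓ) (m : (Fin ℓ → K) → ℕ)
    (U : Submodule K (Fin ℓ → K)) (b : ℕ) : Prop :=
  ∃ d : Fin ℓ → ℕ, IsFreeWithExp (localize A U) m d ∧
    b = ∏ i ∈ Finset.univ.filter (fun i => d i ≠ 0), d i

/-- `b` is the second Betti number `b₂(A,m)` of the multiarrangement `(A,m)`. -/
def IsB2 (A : Arrangement K ℓ) (m : (Fin ℓ → K) → ℕ) (b : ℕ) : Prop :=
  ∃ bloc : Submodule K (Fin ℓ → K) → ℕ,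
    (∀ U, IsFlatOfRank A U 2 → IsLocalB2 A m U (bloc U)) ∧
    b = ∑ᶠ U ∈ {U : Submodule K (Fin ℓ → K) | IsFlatOfRank A U 2}, bloc U

/-- The second Betti number of a simple arrangement:
`b₂(A) = Σ_{X ∈ L₂(A)} (|A_X| - 1)`. -/
noncomputable def b2Simple (A : Arrangement K ℓ) : ℕ :=
  ∑ᶠ U ∈ {U : Submodule K (Fin ℓ → K) | IsFlatOfRank A U 2}, ((locHyps A U).card - 1)

/-- The Euler–Ziegler multiplicity of the restricted hyperplane `H₀ ∩ ker(c)` of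
`A^{H₀}`: `m^{H₀}(X) = |m_X| - m(H₀)`. -/
noncomputable def EZmult (A : Arrangement K ℓ) (m : (Fin ℓ → K) → ℕ)
    (c₀ c : Fin ℓ → K) : ℕ :=
  (∑ c' ∈ A.hyps.filter (· ∈ Submodule.span K ({c₀, c} : Set (Fin ℓ → K))), m c') - m c₀

/-- Two covectors are parallel (define the same hyperplane). -/
def Parallel {n : ℕ} (b b' : Fin n → K) : Prop := ∃ t : K, t ≠ 0 ∧ b' = t • b

/-- The covector on `K^n` obtained by restricting the covector `c` on `K^{n+1}` to the
hyperplane `ker c₀`, transported by the linear isomorphism `e : ker c₀ ≃ K^n`. -/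
noncomputable def resCov {n : ℕ} (c₀ : Fin (n+1) → K)
    (e : ↥(LinearMap.ker (toFunc c₀)) ≃ₗ[K] (Fin n → K)) (c : Fin (n+1) → K) :
    Fin n → K :=
  fun j => toFunc c ((e.symm (Pi.single j 1) : ↥(LinearMap.ker (toFunc c₀))) : Fin (n+1) → K)

/-- `(B, mB)` is (a model, in coordinates, of) the Euler–Ziegler restriction
`(A^{H₀}, m^{H₀})` of `(A,m)` to the hyperplane `H₀ = ker c₀ ∈ A`. -/
def IsEZRes {n : ℕ} (A : Arrangement K (n+1)) (m : (Fin (n+1) → K) → ℕ)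
    (c₀ : Fin (n+1) → K) (B : Arrangement K n) (mB : (Fin n → K) → ℕ) : Prop :=
  c₀ ∈ A.hyps ∧
  ∃ e : ↥(LinearMap.ker (toFunc c₀)) ≃ₗ[K] (Fin n → K),
    (∀ c ∈ A.hyps.erase c₀, ∃ b ∈ B.hyps,
        Parallel b (resCov c₀ e c) ∧ mB b = EZmult A m c₀ c) ∧
    (∀ b ∈ B.hyps, ∃ c ∈ A.hyps.erase c₀, Parallel b (resCov c₀ e c))

/-- A combinatorial equivalence between two arrangements: a bijection between the
hyperplanes inducing an isomorphism of intersection lattices (it preserves the rank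
of every subset of hyperplanes). -/
def CombEquiv (A A' : Arrangement K ℓ) : Prop :=
  ∃ φ : (Fin ℓ → K) → (Fin ℓ → K), Set.BijOn φ ↑A.hyps ↑A'.hyps ∧
    ∀ T : Finset (Fin ℓ → K), T ⊆ A.hyps →
      Module.finrank K (Submodule.span K (T : Set (Fin ℓ → K))) =
      Module.finrank K (Submodule.span K ((T.image φ) : Set (Fin ℓ → K)))

/-- `linForm` as a linear map. -/
noncomputable def linFormHom (K : Type*) [Field K] (ℓ : ℕ) : (Fin ℓ → K) →ₗ[K] S K ℓ :=
  Fintype.linearCombination K (fun i => (MvPolynomial.X i : S K ℓ))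

lemma linFormHom_apply (c : Fin ℓ → K) : linFormHom K ℓ c = linForm c := by
  simp [linFormHom, linForm, Fintype.linearCombination_apply, MvPolynomial.smul_eq_C_mul]

lemma linForm_add (c c' : Fin ℓ → K) : linForm (c + c') = linForm c + linForm c' := by
  simp only [← linFormHom_apply, map_add]

lemma linForm_smul (t : K) (c : Fin ℓ → K) : linForm (t • c) = C t * linForm c := by
  simp only [← linFormHom_apply, map_smul, MvPolynomial.smul_eq_C_mul]

lemma linForm_sum {ι : Type*} (s : Finset ι) (c : ι → Fin ℓ → K) :
    linForm (∑ i ∈ s, c i) = ∑ i ∈ s, linForm (c i) := by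
  simp only [← linFormHom_apply, map_sum]

lemma linForm_single (i : Fin ℓ) : linForm (Pi.single i (1 : K)) = X i := by
  simp [linForm, Pi.single_apply]

lemma der_C_mul (θ : Der K ℓ) (t : K) (p : S K ℓ) : θ (C t * p) = C t * θ p := by
  rw [← MvPolynomial.smul_eq_C_mul, θ.map_smul, MvPolynomial.smul_eq_C_mul]

lemma der_linForm (θ : Der K ℓ) (c : Fin ℓ → K) :
    θ (linForm c) = ∑ i, C (c i) * θ (X i) := by
  rw [linForm, map_sum]
  exact Finset.sum_congr rfl fun i _ => der_C_mul θ _ _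

lemma sum_smul_der_apply (f : Fin ℓ → S K ℓ) (θ : Fin ℓ → Der K ℓ) (p : S K ℓ) :
    (∑ i, f i • θ i) p = ∑ i, f i * θ i p := by
  have := congrFun (map_sum Derivation.coeFnAddMonoidHom (fun i => f i • θ i) Finset.univ) p
  exact this.trans (by simp [Finset.sum_apply])

lemma linForm_isHomogeneous (c : Fin ℓ → K) : (linForm c).IsHomogeneous 1 :=
  IsHomogeneous.sum _ _ _ fun i _ => isHomogeneous_C_mul_X (c i) i

lemma coeff_linForm (c : Fin ℓ → K) (i : Fin ℓ) :
    (linForm c).coeff (Finsupp.single i 1) = c i := by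
  simp only [linForm, MvPolynomial.coeff_sum, MvPolynomial.coeff_C_mul, MvPolynomial.coeff_X]
  simp [Finsupp.single_left_inj]

lemma linForm_injective : Function.Injective (linForm : (Fin ℓ → K) → S K ℓ) := fun c c' h => by
  ext i
  rw [← coeff_linForm c, h, coeff_linForm]

lemma linForm_ne_zero {c : Fin ℓ → K} (hc : c ≠ 0) : linForm c ≠ 0 := fun h =>
  hc (linForm_injective (h.trans (by simp [linForm])))

lemma linForm_irreducible {c : Fin ℓ → K} (hc : c ≠ 0) : Irreducible (linForm c) := by
  obtain ⟨i, hi⟩ := Function.ne_iff.mp hc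
  refine irreducible_of_totalDegree_eq_one
    ((linForm_isHomogeneous c).totalDegree (linForm_ne_zero hc)) fun x hx => ?_
  have h := hx (Finsupp.single i 1)
  rw [coeff_linForm] at h
  exact isUnit_of_dvd_unit h (IsUnit.mk0 _ hi)

lemma linForm_isRelPrime {c c' : Fin ℓ → K} (hc : c ≠ 0) (hc' : c' ≠ 0)
    (h : ∀ t : K, c' ≠ t • c) : IsRelPrime (linForm c) (linForm c') := by
  rw [(linForm_irreducible hc).isRelPrime_iff_not_dvd]
  intro hd
  obtain ⟨u, hu⟩ := (linForm_irreducible hc).associated_of_dvd (linForm_irreducible hc') hd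
  obtain ⟨t, -, ht⟩ := MvPolynomial.isUnit_iff_eq_C_of_isReduced.mp u.isUnit
  refine h t (linForm_injective ?_)
  rw [linForm_smul, ← hu, ht, mul_comm]

lemma Arrangement.isRelPrime (A : Arrangement K ℓ) {c c' : Fin ℓ → K} (hc : c ∈ A.hyps)
    (hc' : c' ∈ A.hyps) (h : c ≠ c') : IsRelPrime (linForm c) (linForm c') :=
  linForm_isRelPrime (A.ne_zero c hc) (A.ne_zero c' hc') (A.nonparallel c hc c' hc' h)

/-- The defining polynomial `∏ α_H ^ m(H)` of a multiarrangement. -/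
noncomputable def definingPoly (A : Arrangement K ℓ) (m : (Fin ℓ → K) → ℕ) : S K ℓ :=
  ∏ c ∈ A.hyps, linForm c ^ m c

lemma definingPoly_ne_zero (A : Arrangement K ℓ) (m : (Fin ℓ → K) → ℕ) :
    definingPoly A m ≠ 0 :=
  Finset.prod_ne_zero_iff.mpr fun c hc => pow_ne_zero _ (linForm_ne_zero (A.ne_zero c hc))

lemma definingPoly_isHomogeneous (A : Arrangement K ℓ) (m : (Fin ℓ → K) → ℕ) :
    (definingPoly A m).IsHomogeneous (msum A m) :=
  IsHomogeneous.prod _ _ _ fun c _ => by simpa using (linForm_isHomogeneous c).pow (m c)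

lemma definingPoly_dvd_of_forall {A : Arrangement K ℓ} {m : (Fin ℓ → K) → ℕ} {p : S K ℓ}
    (h : ∀ c ∈ A.hyps, linForm c ^ m c ∣ p) : definingPoly A m ∣ p :=
  Finset.prod_dvd_of_isRelPrime
    (fun _ hc _ hc' hne => (A.isRelPrime hc hc' hne).pow) h

/-- The matrix of coefficients of a family of derivations. -/
noncomputable def coeffMatrix (θ : Fin ℓ → Der K ℓ) : Matrix (Fin ℓ) (Fin ℓ) (S K ℓ) :=
  Matrix.of fun i j => θ i (X j)

/-- The determinant of a family of logarithmic derivations is divisible by the defining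
polynomial. -/
lemma definingPoly_dvd_det {A : Arrangement K ℓ} {m : (Fin ℓ → K) → ℕ} {θ : Fin ℓ → Der K ℓ}
    (h : ∀ i, IsLogDer A m (θ i)) : definingPoly A m ∣ (coeffMatrix θ).det := by
  refine definingPoly_dvd_of_forall fun c hc => ?_
  obtain ⟨j, hj⟩ := Function.ne_iff.mp (A.ne_zero c hc)
  choose q hq using fun i => h i c hc
  have key := Matrix.det_updateCol_sum (coeffMatrix θ) j fun i => C (c i)
  have hcol : (fun k => ∑ i, (C (c i) : S K ℓ) • coeffMatrix θ k i)
      = (linForm c ^ m c) • q := by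
    ext1 k
    rw [Pi.smul_apply, smul_eq_mul, ← hq k, der_linForm]
    rfl
  rw [hcol, Matrix.det_updateCol_smul] at key
  have hu : IsUnit (C (c j) : S K ℓ) := (IsUnit.mk0 _ hj).map C
  exact (hu.dvd_mul_left).mp (Dvd.intro _ key)

/-- Saito's criterion: logarithmic derivations whose determinant is the defining polynomial,
up to a unit, form a basis. -/
lemma isDerBasis_of_det {A : Arrangement K ℓ} {m : (Fin ℓ → K) → ℕ} {θ : Fin ℓ → Der K ℓ}
    (h : ∀ i, IsLogDer A m (θ i)) (hdet : Associated (definingPoly A m) (coeffMatrix θ).det) :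
    IsDerBasis A m θ := by
  have hne : (coeffMatrix θ).det ≠ 0 := hdet.ne_zero_iff.mp (definingPoly_ne_zero A m)
  have hext : ∀ (η : Der K ℓ) (f : Fin ℓ → S K ℓ), η = ∑ i, f i • θ i ↔
      (coeffMatrix θ).transpose.mulVec f = fun j => η (X j) := by
    intro η f
    constructor
    · rintro rfl
      ext1 j
      simp [Matrix.mulVec, dotProduct, coeffMatrix, mul_comm, sum_smul_der_apply]
    · intro hf
      refine MvPolynomial.derivation_ext fun j => ?_
      rw [← congrFun hf j]
      simp [Matrix.mulVec, dotProduct, coeffMatrix, mul_comm, sum_smul_der_apply]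
  refine ⟨h, fun η hη => ?_⟩
  have hdvd : ∀ i, (coeffMatrix θ).det ∣
      (coeffMatrix θ).transpose.cramer (fun j => η (X j)) i := by
    intro i
    rw [Matrix.cramer_transpose_apply]
    refine hdet.symm.dvd.trans ?_
    have hup : (coeffMatrix θ).updateRow i (fun j => η (X j))
        = coeffMatrix (Function.update θ i η) := by
      ext1 k j
      by_cases hk : k = i
      · subst hk; simp [coeffMatrix]
      · simp [coeffMatrix, hk]
    rw [hup]
    refine definingPoly_dvd_det fun k => ?_
    by_cases hk : k = i
    · subst hk; simpa using hη
    · simpa [hk] using h k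
  choose f hf using hdvd
  have hne' : (coeffMatrix θ).transpose.det ≠ 0 := by rwa [Matrix.det_transpose]
  have hsol : (coeffMatrix θ).transpose.mulVec f = fun j => η (X j) := by
    have h1 := Matrix.mulVec_cramer (coeffMatrix θ).transpose (fun j => η (X j))
    have h2 : (coeffMatrix θ).transpose.cramer (fun j => η (X j))
        = (coeffMatrix θ).det • f := funext hf
    rw [h2, Matrix.mulVec_smul, Matrix.det_transpose] at h1
    exact smul_right_injective _ hne h1
  refine ⟨f, (hext η f).mpr hsol, fun f' hf' => ?_⟩
  replace hf' := (hext η f').mp hf'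
  refine sub_eq_zero.mp (Matrix.eq_zero_of_mulVec_eq_zero hne' ?_)
  rw [Matrix.mulVec_sub, hf', hsol, sub_self]

/-- The matrix of a family of logarithmic derivations is divisible by the matrix of a basis. -/
lemma IsDerBasis.det_dvd {A : Arrangement K ℓ} {m : (Fin ℓ → K) → ℕ} {θ : Fin ℓ → Der K ℓ}
    (hθ : IsDerBasis A m θ) {η : Fin ℓ → Der K ℓ} (hη : ∀ i, IsLogDer A m (η i)) :
    (coeffMatrix θ).det ∣ (coeffMatrix η).det := by
  choose f hf _ using fun i => hθ.2 (η i) (hη i)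
  have : coeffMatrix η = Matrix.of f * coeffMatrix θ := by
    ext1 i j
    simp only [coeffMatrix, Matrix.of_apply, Matrix.mul_apply]
    rw [hf i]
    exact sum_smul_der_apply _ _ _
  rw [this, Matrix.det_mul]
  exact Dvd.intro_left _ rfl

/-- The determinant of a basis divides the determinant of a family adapted to one hyperplane. -/
lemma IsDerBasis.det_dvd_definingPoly_mul {A : Arrangement K ℓ} {m : (Fin ℓ → K) → ℕ}
    {θ : Fin ℓ → Der K ℓ} (hθ : IsDerBasis A m θ) {c : Fin ℓ → K} (hc : c ∈ A.hyps) :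
    (coeffMatrix θ).det ∣
      definingPoly A m * (∏ c' ∈ A.hyps.erase c, linForm c' ^ m c') ^ (ℓ - 1) := by
  set R : S K ℓ := ∏ c' ∈ A.hyps.erase c, linForm c' ^ m c'
  have hQ : definingPoly A m = linForm c ^ m c * R :=
    (Finset.mul_prod_erase _ (fun c' => linForm c' ^ m c') hc).symm
  obtain ⟨j, hj⟩ := Function.ne_iff.mp (A.ne_zero c hc)
  rw [Pi.zero_apply] at hj
  let v : Fin ℓ → S K ℓ := fun i => if i = j then 1 else C (-(c i / c j))
  let D : Fin ℓ → S K ℓ := fun i => if i = j then definingPoly A m else R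
  let N : Matrix (Fin ℓ) (Fin ℓ) (S K ℓ) := (1 : Matrix _ _ _).updateCol j v
  let η : Fin ℓ → Der K ℓ := fun i => mkDerivation K fun l => D i * N i l
  have hηX : ∀ i l, η i (X l) = D i * N i l := fun i l => mkDerivation_X _ _ _
  have hdet : (coeffMatrix η).det = definingPoly A m * R ^ (ℓ - 1) := by
    have h1 : coeffMatrix η = Matrix.of fun i l => D i * N i l := by
      ext1 i l
      exact hηX i l
    have h2 : N.det = 1 := by
      have := congrFun (congrFun (congrArg DFunLike.coe
        (Matrix.cramer_one (n := Fin ℓ) (α := S K ℓ))) v) j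
      rw [Matrix.cramer_apply] at this
      rw [this]
      simp [v]
    rw [h1, Matrix.det_mul_column, h2, mul_one, ← Finset.mul_prod_erase _ _ (Finset.mem_univ j)]
    simp only [D, if_true]
    congr 1
    rw [Finset.prod_congr rfl fun i hi => if_neg (Finset.ne_of_mem_erase hi), Finset.prod_const,
      Finset.card_erase_of_mem (Finset.mem_univ j), Finset.card_univ, Fintype.card_fin]
  rw [← hdet]
  refine hθ.det_dvd fun i c' hc' => ?_
  have hval : ∀ c' : Fin ℓ → K, η i (linForm c') = D i * ∑ l, C (c' l) * N i l := by
    intro c'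
    rw [der_linForm, Finset.mul_sum]
    refine Finset.sum_congr rfl fun l _ => ?_
    rw [hηX]
    ring
  rw [hval]
  by_cases hij : i = j
  · have : D i = definingPoly A m := if_pos hij
    rw [this]
    exact (Finset.dvd_prod_of_mem _ hc').mul_right _
  have hD : D i = R := if_neg hij
  rw [hD]
  by_cases hcc : c' = c
  · subst hcc
    have : ∑ l, (C (c' l) : S K ℓ) * N i l = 0 := by
      have hN : ∀ l, N i l = (if l = i then 1 else 0) + if l = j then v i else 0 := by
        intro l
        by_cases hl : l = j
        · subst hl; simp [N, Ne.symm hij]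
        · simp [N, hl, Matrix.one_apply, eq_comm]
      simp only [hN, mul_add, Finset.sum_add_distrib, mul_ite, mul_one, mul_zero,
        Finset.sum_ite_eq', Finset.mem_univ, if_true, v, if_neg hij, ← C_mul, ← C_add]
      rw [mul_neg, mul_div_cancel₀ _ hj, add_neg_cancel, C_0]
    rw [this, mul_zero]
    exact dvd_zero _
  · exact (Finset.dvd_prod_of_mem _ (Finset.mem_erase.mpr ⟨hcc, hc'⟩)).mul_right _

/-- Saito's criterion: the determinant of a basis is the defining polynomial, up to a unit. -/
lemma IsDerBasis.associated_det {A : Arrangement K ℓ} {m : (Fin ℓ → K) → ℕ}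
    {θ : Fin ℓ → Der K ℓ} (hθ : IsDerBasis A m θ) (hA : A.hyps.Nonempty) :
    Associated (definingPoly A m) (coeffMatrix θ).det := by
  obtain ⟨u, hu⟩ := definingPoly_dvd_det hθ.1
  have hdvd : ∀ c ∈ A.hyps, u ∣ (∏ c' ∈ A.hyps.erase c, linForm c' ^ m c') ^ (ℓ - 1) := by
    intro c hc
    have := hθ.det_dvd_definingPoly_mul hc
    rw [hu] at this
    exact (mul_dvd_mul_iff_left (definingPoly_ne_zero A m)).mp this
  have hstep : ∀ p : S K ℓ, Prime p → p ∣ u → ∀ c ∈ A.hyps,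
      ∃ c' ∈ A.hyps, c' ≠ c ∧ p ∣ linForm c' := by
    intro p hp hpu c hc
    obtain ⟨c', hc', hpc'⟩ :=
      (hp.dvd_finsetProd_iff _).mp (hp.dvd_of_dvd_pow (hpu.trans (hdvd c hc)))
    exact ⟨c', Finset.mem_of_mem_erase hc', Finset.ne_of_mem_erase hc', hp.dvd_of_dvd_pow hpc'⟩
  obtain ⟨c, hc⟩ := hA
  have hu0 : u ≠ 0 := by
    rintro rfl
    have := zero_dvd_iff.mp (hdvd c hc)
    refine pow_ne_zero _ (Finset.prod_ne_zero_iff.mpr fun c' hc' => ?_) this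
    exact pow_ne_zero _ (linForm_ne_zero (A.ne_zero c' (Finset.mem_of_mem_erase hc')))
  have hunit : IsUnit u := by
    by_contra hnu
    obtain ⟨p, hp, hpu⟩ := WfDvdMonoid.exists_irreducible_factor hnu hu0
    obtain ⟨c₁, hc₁, -, hp₁⟩ := hstep p hp.prime hpu c hc
    obtain ⟨c₂, hc₂, hne, hp₂⟩ := hstep p hp.prime hpu c₁ hc₁
    exact hp.not_isUnit (A.isRelPrime hc₂ hc₁ hne hp₂ hp₁)
  rw [hu]
  exact (associated_mul_unit_right _ _ hunit)

/-- Hermite interpolation by a polynomial of bounded degree. -/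
lemma exists_polynomial_interpolation {ι : Type*} (F : Finset ι) (a : ι → K)
    (ha : Set.InjOn a F) (m : ι → ℕ) (hM : 0 < ∑ i ∈ F, m i) :
    ∃ q : Polynomial K, q.natDegree < ∑ i ∈ F, m i ∧
      ∀ i ∈ F, (Polynomial.X + Polynomial.C (a i)) ^ m i ∣ q + Polynomial.C (a i) := by
  let l : ι → Polynomial K := fun i => (Polynomial.X + Polynomial.C (a i)) ^ m i
  have hco : Pairwise (Function.onFun IsCoprime fun i : F => Ideal.span {l i}) := by
    intro i j hij
    rw [Function.onFun, Ideal.isCoprime_span_singleton_iff]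
    refine IsCoprime.pow ?_
    have hne : a i ≠ a j := fun h => hij (Subtype.ext (ha i.2 j.2 h))
    have := Polynomial.isCoprime_X_sub_C_of_isUnit_sub (a := -a i) (b := -a j)
      (IsUnit.mk0 _ (by rw [neg_sub_neg]; exact sub_ne_zero.mpr hne.symm))
    simpa using this
  obtain ⟨r, hr⟩ := Ideal.exists_forall_sub_mem_ideal hco
    (fun i : F => -Polynomial.C (a i))
  have hmonic : (∏ i ∈ F, l i).Monic :=
    Polynomial.monic_prod_of_monic _ _ fun i _ => (Polynomial.monic_X_add_C _).pow _
  have hdeg : (∏ i ∈ F, l i).natDegree = ∑ i ∈ F, m i := by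
    rw [Polynomial.natDegree_prod_of_monic _ _ fun i _ => (Polynomial.monic_X_add_C _).pow _]
    exact Finset.sum_congr rfl fun i _ => by simp
  refine ⟨r %ₘ ∏ i ∈ F, l i, ?_, fun i hi => ?_⟩
  · rw [← hdeg]
    refine Polynomial.natDegree_modByMonic_lt _ hmonic fun h => ?_
    rw [h, Polynomial.natDegree_one] at hdeg
    omega
  · have h1 : l i ∣ r + Polynomial.C (a i) := by
      simpa [Ideal.mem_span_singleton] using hr ⟨i, hi⟩
    have h2 : l i ∣ ∏ i ∈ F, l i := Finset.dvd_prod_of_mem _ hi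
    have h3 : r %ₘ (∏ i ∈ F, l i) + Polynomial.C (a i)
        = (r + Polynomial.C (a i)) - (∏ i ∈ F, l i) * (r /ₘ ∏ i ∈ F, l i) := by
      linear_combination Polynomial.modByMonic_add_div r (∏ i ∈ F, l i)
    rw [h3]
    exact dvd_sub h1 (h2.mul_right _)

lemma pow_dvd_aeval_homogenize {R : Type*} [CommRing R] [Algebra K R] (y z : R) {a : K}
    {k m : ℕ} (hm : m ≤ k) {q : Polynomial K} (hq : q.natDegree ≤ k)
    (h : (Polynomial.X + Polynomial.C a) ^ m ∣ q + Polynomial.C a) :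
    (y + algebraMap K R a * z) ^ m ∣
      aeval ![y, z] (q.homogenize k) + algebraMap K R a * z ^ k := by
  obtain ⟨r, hr⟩ := h
  have hl : ((Polynomial.X + Polynomial.C a) ^ m).natDegree = m := by simp
  have hrdeg : r.natDegree ≤ k - m := by
    by_cases hr0 : r = 0
    · simp [hr0]
    have h1 : (q + Polynomial.C a).natDegree ≤ k := by simpa using hq
    rw [hr, ((Polynomial.monic_X_add_C a).pow m).natDegree_mul' hr0, hl] at h1
    omega
  have hhom : ∀ j, ((Polynomial.X + Polynomial.C a) ^ j).homogenize j
      = (X 0 + C a * X 1 : MvPolynomial (Fin 2) K) ^ j := by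
    intro j
    refine Polynomial.homogenize_eq_of_isHomogeneous ?_ ?_
    · simpa using ((isHomogeneous_X K (0 : Fin 2)).add (isHomogeneous_C_mul_X a 1)).pow j
    · simp
  have key : q.homogenize k + C a * X 1 ^ k
      = (X 0 + C a * X 1) ^ m * r.homogenize (k - m) := by
    rw [← Polynomial.homogenize_C, ← Polynomial.homogenize_add, hr, ← hhom,
      ← Polynomial.homogenize_mul _ _ hl.le hrdeg, Nat.add_sub_of_le hm]
  have := congrArg (aeval ![y, z]) key
  simp only [map_add, map_mul, map_pow, aeval_C, aeval_X] at this
  exact Dvd.intro _ this.symm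

lemma dvd_aeval_homogenize {R : Type*} [CommRing R] [Algebra K R] (y z : R) {k : ℕ}
    {q : Polynomial K} (hq : q.natDegree < k) : z ∣ aeval ![y, z] (q.homogenize k) := by
  have key : q.homogenize k = q.homogenize (k - 1) * X 1 := by
    conv_lhs => rw [← mul_one q, ← Nat.sub_add_cancel (show 1 ≤ k by omega)]
    rw [Polynomial.homogenize_mul _ _ (by omega) (by simp)]
    simp
  rw [key, map_mul, aeval_X]
  exact Dvd.intro_left _ rfl

/-- If `P + aᵢ zᵏ g` is divisible by `(y + aᵢ z) ^ mᵢ` for all `i` and `∑ mᵢ ≤ k`, then `P` is a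
multiple of `∏ (y + aᵢ z) ^ mᵢ` modulo `z`. -/
lemma exists_eq_prod_mul_add {R ι : Type*} [CommRing R] [IsDomain R]
    [DecompositionMonoid R] [Algebra K R]
    (F : Finset ι) (a : ι → K) (ha : Set.InjOn a F) (m : ι → ℕ) {k : ℕ}
    (hk : ∑ i ∈ F, m i ≤ k) (y z P g : R)
    (hrel : (F : Set ι).Pairwise
      fun i j => IsRelPrime (y + algebraMap K R (a i) * z) (y + algebraMap K R (a j) * z))
    (h : ∀ i ∈ F, (y + algebraMap K R (a i) * z) ^ m i ∣ P + algebraMap K R (a i) * (z ^ k * g)) :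
    ∃ r s : R, P = (∏ i ∈ F, (y + algebraMap K R (a i) * z) ^ m i) * r + z * s := by
  rcases Nat.eq_zero_or_pos (∑ i ∈ F, m i) with h0 | hpos
  · refine ⟨P, 0, ?_⟩
    rw [Finset.prod_congr rfl fun i hi => by
      rw [Finset.sum_eq_zero_iff.mp h0 i hi, pow_zero], Finset.prod_const_one]
    ring
  obtain ⟨q, hqdeg, hq⟩ := exists_polynomial_interpolation F a ha m hpos
  obtain ⟨s, hs⟩ := dvd_aeval_homogenize y z (hqdeg.trans_le hk)
  have hdvd : (∏ i ∈ F, (y + algebraMap K R (a i) * z) ^ m i) ∣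
      P - aeval ![y, z] (q.homogenize k) * g := by
    refine Finset.prod_dvd_of_isRelPrime (fun i hi j hj hij => (hrel hi hj hij).pow)
      fun i hi => ?_
    have h1 := pow_dvd_aeval_homogenize y z
      ((Finset.single_le_sum (fun _ _ => Nat.zero_le _) hi).trans hk)
      (hqdeg.le.trans hk) (hq i hi)
    have h2 := dvd_sub (h i hi) (h1.mul_right g)
    convert! h2 using 1
    ring
  obtain ⟨r, hr⟩ := hdvd
  refine ⟨r, s * g, ?_⟩
  rw [← mul_assoc, ← hs, ← hr]
  ring

/-- A cofactor with nonzero constant term of a homogeneous polynomial in a homogeneous polynomial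
is constant. -/
lemma eq_C_of_isHomogeneous_mul {σ : Type*} {p q : MvPolynomial σ K} {a b : ℕ}
    (hp : p.IsHomogeneous a) (hp0 : p ≠ 0) (hpq : (p * q).IsHomogeneous b)
    (hq : constantCoeff q ≠ 0) : a = b ∧ q = C (constantCoeff q) := by
  let _ : GradedAlgebra (homogeneousSubmodule σ K) := gradedAlgebra
  have h := DirectSum.coe_decompose_mul_add_of_left_mem (homogeneousSubmodule σ K) (a := p)
    (b := q) (i := a) (j := 0) hp
  have e : ∀ (f : MvPolynomial σ K) (i : ℕ),
    (DirectSum.decompose (homogeneousSubmodule σ K) f i : MvPolynomial σ K)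
      = homogeneousComponent i f := decomposition.decompose'_apply
  rw [e, e, homogeneousComponent_zero, add_zero, homogeneousComponent_of_mem hpq] at h
  have hab : a = b := by
    by_contra hab
    rw [if_neg hab] at h
    exact mul_ne_zero hp0 (C_eq_zero.not.mpr hq) h.symm
  subst hab
  rw [if_pos rfl] at h
  exact ⟨rfl, mul_left_cancel₀ hp0 h⟩

section Restriction

variable {n : ℕ} {c₀ : Fin (n+1) → K} (e : ↥(LinearMap.ker (toFunc c₀)) ≃ₗ[K] (Fin n → K))

lemma toFunc_apply (c v : Fin ℓ → K) : toFunc c v = ∑ i, c i * v i := by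
  simp [toFunc]

lemma toFunc_single (c : Fin ℓ → K) (i : Fin ℓ) : toFunc c (Pi.single i 1) = c i := by
  simp [toFunc_apply, Pi.single_apply]

/-- `resCov` as a linear map. -/
noncomputable def resCovHom : (Fin (n+1) → K) →ₗ[K] (Fin n → K) where
  toFun := resCov c₀ e
  map_add' c c' := by
    ext j
    simp [resCov, toFunc_apply, add_mul, Finset.sum_add_distrib]
  map_smul' t c := by
    ext j
    simp [resCov, toFunc_apply, mul_assoc, Finset.mul_sum]

lemma resCovHom_apply (c : Fin (n+1) → K) : resCovHom e c = resCov c₀ e c := rfl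

lemma resCovHom_self : resCovHom e c₀ = 0 := by
  ext j
  exact (e.symm (Pi.single j 1)).2

/-- A covector vanishing on `ker c₀` is a multiple of `c₀`. -/
lemma exists_eq_smul_of_resCovHom_eq_zero (hc₀ : c₀ ≠ 0) {c : Fin (n+1) → K}
    (hc : resCovHom e c = 0) : ∃ t : K, c = t • c₀ := by
  have hker : ∀ v : LinearMap.ker (toFunc c₀), toFunc c v = 0 := by
    have h : (toFunc c ∘ₗ (LinearMap.ker (toFunc c₀)).subtype) ∘ₗ e.symm.toLinearMap = 0 := by
      refine LinearMap.pi_ext' fun j => LinearMap.ext_ring ?_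
      exact congrFun hc j
    intro v
    simpa using LinearMap.congr_fun h (e v)
  obtain ⟨i, hi⟩ := Function.ne_iff.mp hc₀
  rw [Pi.zero_apply] at hi
  refine ⟨c i / c₀ i, funext fun l => ?_⟩
  have h := hker ⟨Pi.single l 1 - (c₀ l / c₀ i) • Pi.single i 1, by
    rw [LinearMap.mem_ker, map_sub, map_smul, toFunc_single, toFunc_single, smul_eq_mul,
      div_mul_cancel₀ _ hi, sub_self]⟩
  rw [map_sub, map_smul, toFunc_single, toFunc_single, sub_eq_zero] at h
  rw [h, Pi.smul_apply, smul_eq_mul, smul_eq_mul]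
  ring

lemma resCovHom_surjective : Function.Surjective (resCovHom e) := by
  intro b
  obtain ⟨φ, hφ⟩ := LinearMap.exists_extend (toFunc b ∘ₗ e.toLinearMap)
  have htf : toFunc (fun i => φ (Pi.single i 1)) = φ := by
    refine LinearMap.pi_ext' fun i => LinearMap.ext_ring ?_
    exact toFunc_single _ _
  refine ⟨fun i => φ (Pi.single i 1), funext fun j => ?_⟩
  rw [resCovHom_apply, resCov, htf]
  have := LinearMap.congr_fun hφ (e.symm (Pi.single j 1))
  simpa [toFunc_single] using this

/-- Covectors extending the coordinates of `ker c₀`. -/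
noncomputable def coordLift (j : Fin n) : Fin (n+1) → K :=
  (resCovHom_surjective e (Pi.single j 1)).choose

lemma resCovHom_coordLift (j : Fin n) : resCovHom e (coordLift e j) = Pi.single j 1 :=
  (resCovHom_surjective e (Pi.single j 1)).choose_spec

lemma exists_eq_sum_coordLift_add (hc₀ : c₀ ≠ 0) (c : Fin (n+1) → K) :
    ∃ t : K, c = ∑ j, resCov c₀ e c j • coordLift e j + t • c₀ := by
  obtain ⟨t, ht⟩ := exists_eq_smul_of_resCovHom_eq_zero e hc₀
    (c := c - ∑ j, resCov c₀ e c j • coordLift e j) (by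
      rw [map_sub, map_sum, resCovHom_apply, sub_eq_zero]
      simp only [map_smul, resCovHom_coordLift]
      ext j
      simp [Finset.sum_apply, Pi.single_apply])
  exact ⟨t, by rw [← ht]; abel⟩

/-- The covector `c₀` together with lifts of the coordinates of `ker c₀`. -/
noncomputable def frame : Matrix (Fin (n+1)) (Fin (n+1)) K :=
  Matrix.of (Fin.cons c₀ (coordLift e))

lemma isUnit_det_frame (hc₀ : c₀ ≠ 0) : IsUnit (frame e).det := by
  rw [← Matrix.isUnit_iff_isUnit_det, ← Matrix.linearIndependent_rows_iff_isUnit,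
    Fintype.linearIndependent_iff]
  intro a ha
  rw [Fin.sum_univ_succ] at ha
  have ha' : a 0 • c₀ + ∑ j : Fin n, a j.succ • coordLift e j = 0 := ha
  have hsucc : ∀ j : Fin n, a j.succ = 0 := by
    have h := congrArg (resCovHom e) ha'
    simp only [map_add, map_smul, map_sum, resCovHom_self, resCovHom_coordLift, smul_zero,
      zero_add, map_zero] at h
    intro j
    simpa [Finset.sum_apply, Pi.single_apply] using congrFun h j
  simp only [hsucc, zero_smul, Finset.sum_const_zero, add_zero] at ha'
  intro i
  refine Fin.cases ?_ hsucc i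
  exact (smul_eq_zero.mp ha').resolve_right hc₀

/-- Restriction of polynomials to `ker c₀`. -/
noncomputable def resHom : S K (n+1) →ₐ[K] S K n :=
  aeval fun i => linForm fun j => ((e.symm (Pi.single j 1) : LinearMap.ker (toFunc c₀)) :
    Fin (n+1) → K) i

lemma resHom_linForm (c : Fin (n+1) → K) : resHom e (linForm c) = linForm (resCov c₀ e c) := by
  rw [linForm, map_sum]
  simp only [map_mul, resHom, aeval_X, aeval_C, MvPolynomial.algebraMap_eq, ← linForm_smul]
  rw [← linForm_sum]
  congr 1
  ext j
  simp [resCov, toFunc_apply, Finset.sum_apply]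

lemma resHom_linForm_self : resHom e (linForm c₀) = 0 := by
  rw [resHom_linForm, ← resCovHom_apply, resCovHom_self]
  simp [linForm]

lemma constantCoeff_resHom (p : S K (n+1)) : constantCoeff (resHom e p) = constantCoeff p := by
  have : (constantCoeff : S K n →+* K).comp (resHom e : S K (n+1) →+* S K n)
      = constantCoeff := by
    refine MvPolynomial.ringHom_ext (fun r => ?_) fun i => ?_
    · simp [resHom]
    · simp [resHom, linForm]
  exact RingHom.congr_fun this p

/-- Restriction of derivations to `ker c₀`. -/
noncomputable def resDer (θ : Der K (n+1)) : Der K n :=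
  mkDerivation K fun j => resHom e (θ (linForm (coordLift e j)))

lemma resDer_X (θ : Der K (n+1)) (j : Fin n) :
    resDer e θ (X j) = resHom e (θ (linForm (coordLift e j))) :=
  mkDerivation_X _ _ _

lemma resDer_isHomogOfDeg {θ : Der K (n+1)} {d : ℕ} (hθ : IsHomogOfDeg θ d) :
    IsHomogOfDeg (resDer e θ) d := by
  intro c
  rw [der_linForm]
  refine IsHomogeneous.sum _ _ _ fun j _ => IsHomogeneous.C_mul ?_ _
  rw [resDer_X]
  have h := (hθ (coordLift e j)).aeval (fun i => linForm fun j =>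
    ((e.symm (Pi.single j 1) : LinearMap.ker (toFunc c₀)) : Fin (n+1) → K) i)
    fun i => linForm_isHomogeneous _
  rw [one_mul] at h
  exact h

lemma resDer_linForm_resCov (hc₀ : c₀ ≠ 0) {θ : Der K (n+1)}
    (hθ : linForm c₀ ∣ θ (linForm c₀)) (c : Fin (n+1) → K) :
    resDer e θ (linForm (resCov c₀ e c)) = resHom e (θ (linForm c)) := by
  obtain ⟨t, ht⟩ := exists_eq_sum_coordLift_add e hc₀ c
  obtain ⟨g, hg⟩ := hθ
  have h : θ (linForm c) = ∑ j, C (resCov c₀ e c j) * θ (linForm (coordLift e j))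
      + C t * (linForm c₀ * g) := by
    conv_lhs => rw [ht]
    rw [linForm_add, linForm_sum, linForm_smul, map_add, map_sum, der_C_mul, hg]
    simp only [linForm_smul, der_C_mul]
  rw [h, der_linForm, map_add, map_sum, map_mul, map_mul, resHom_linForm_self, zero_mul, mul_zero,
    add_zero]
  refine Finset.sum_congr rfl fun j _ => ?_
  rw [resDer_X, map_mul]
  simp [resHom]

lemma det_linForm_frame (θ : Fin (n+1) → Der K (n+1)) :
    (Matrix.of fun i j => θ i (linForm (frame e j))).det
      = (coeffMatrix θ).det * C (frame e).det := by
  have : (Matrix.of fun i j => θ i (linForm (frame e j)))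
      = coeffMatrix θ * ((frame e).map C).transpose := by
    ext1 i j
    simp only [Matrix.of_apply, Matrix.mul_apply, der_linForm, coeffMatrix,
      Matrix.transpose_apply, Matrix.map_apply]
    exact Finset.sum_congr rfl fun l _ => mul_comm _ _
  rw [this, Matrix.det_mul, Matrix.det_transpose, RingHom.map_det]
  rfl

/-- The hyperplanes other than `c₀` that restrict to the same hyperplane of `ker c₀` as `c`. -/
noncomputable def fiberHyps (A : Arrangement K ℓ) (c₀ c : Fin ℓ → K) : Finset (Fin ℓ → K) :=
  (locHyps A (Submodule.span K {c₀, c})).erase c₀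

lemma EZmult_eq_sum_fiberHyps {A : Arrangement K ℓ} (m : (Fin ℓ → K) → ℕ) {c₀ : Fin ℓ → K}
    (hc₀ : c₀ ∈ A.hyps) (c : Fin ℓ → K) :
    EZmult A m c₀ c = ∑ c' ∈ fiberHyps A c₀ c, m c' := by
  have h : c₀ ∈ locHyps A (Submodule.span K {c₀, c}) :=
    Finset.mem_filter.mpr ⟨hc₀, Submodule.subset_span (by simp)⟩
  have := Finset.add_sum_erase _ m h
  change (∑ c' ∈ locHyps A (Submodule.span K {c₀, c}), m c') - m c₀ = _
  rw [← this, fiberHyps, Nat.add_sub_cancel_left]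

lemma mem_fiberHyps_self {A : Arrangement K ℓ} {c₀ c : Fin ℓ → K} (hc : c ∈ A.hyps.erase c₀) :
    c ∈ fiberHyps A c₀ c := by
  rw [Finset.mem_erase] at hc
  exact Finset.mem_erase.mpr
    ⟨hc.1, Finset.mem_filter.mpr ⟨hc.2, Submodule.subset_span (by simp)⟩⟩

lemma mem_hyps_of_mem_fiberHyps {A : Arrangement K ℓ} {c₀ c c' : Fin ℓ → K}
    (h : c' ∈ fiberHyps A c₀ c) : c' ∈ A.hyps :=
  (Finset.mem_filter.mp (Finset.mem_of_mem_erase h)).1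

lemma exists_eq_smul_add_of_mem_fiberHyps {A : Arrangement K ℓ} {c₀ c c' : Fin ℓ → K}
    (hc₀ : c₀ ∈ A.hyps) (h : c' ∈ fiberHyps A c₀ c) :
    ∃ a t : K, t ≠ 0 ∧ c' = t • (c + a • c₀) := by
  obtain ⟨hne, h⟩ := Finset.mem_erase.mp h
  obtain ⟨hA, hU⟩ := Finset.mem_filter.mp h
  obtain ⟨x, y, rfl⟩ := Submodule.mem_span_pair.mp hU
  have hy : y ≠ 0 := by
    rintro rfl
    exact A.nonparallel c₀ hc₀ _ hA (Ne.symm hne) x (by simp)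
  refine ⟨x / y, y, hy, ?_⟩
  rw [smul_add, smul_smul, mul_div_cancel₀ _ hy, add_comm]

/-- Local heaviness bounds the multiplicity of every restricted hyperplane in which several
hyperplanes meet. -/
lemma IsLocallyHeavy.sum_fiberHyps_le {A : Arrangement K ℓ} {m : (Fin ℓ → K) → ℕ}
    {c₀ c : Fin ℓ → K} (h : IsLocallyHeavy A m c₀) (hc : c ∈ A.hyps.erase c₀)
    (hcard : 1 < (fiberHyps A c₀ c).card) : ∑ c' ∈ fiberHyps A c₀ c, m c' ≤ m c₀ := by
  obtain ⟨hne, hcA⟩ := Finset.mem_erase.mp hc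
  have hmem : ∀ x ∈ ({c₀, c} : Set (Fin ℓ → K)),
      x ∈ locHyps A (Submodule.span K {c₀, c}) := by
    intro x hx
    refine Finset.mem_filter.mpr ⟨?_, Submodule.subset_span hx⟩
    rcases hx with rfl | rfl
    exacts [h.1, hcA]
  refine h.2 _ ⟨?_, ?_⟩ (Submodule.subset_span (by simp)) ?_
  · have hli : LinearIndependent K ![c₀, c] :=
      (LinearIndependent.pair_iff' (A.ne_zero c₀ h.1)).mpr fun t ht =>
        A.nonparallel c₀ h.1 c hcA (Ne.symm hne) t ht.symm
    have := finrank_span_eq_card hli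
    rwa [Matrix.range_cons, Matrix.range_cons, Matrix.range_empty, Set.union_empty,
      Set.singleton_union, Fintype.card_fin] at this
  · refine le_antisymm (Submodule.span_le.mpr fun x hx => (Finset.mem_filter.mp hx).2) ?_
    exact Submodule.span_mono hmem
  · have := Finset.card_erase_add_one (hmem c₀ (by simp))
    rw [fiberHyps] at hcard
    omega

/-- The divisibility making the restriction of a logarithmic derivation logarithmic. -/
lemma resHom_linForm_pow_dvd {A : Arrangement K (n+1)} {m : (Fin (n+1) → K) → ℕ}
    (h : IsLocallyHeavy A m c₀) {θ : Der K (n+1)} (hθ : IsLogDer A m θ)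
    {c : Fin (n+1) → K} (hc : c ∈ A.hyps.erase c₀) :
    resHom e (linForm c) ^ EZmult A m c₀ c ∣ resHom e (θ (linForm c)) := by
  rw [EZmult_eq_sum_fiberHyps m h.1]
  set F := fiberHyps A c₀ c
  rcases lt_or_ge 1 F.card with hcard | hcard
  swap
  · have hFc : F = {c} := Finset.eq_singleton_iff_unique_mem.mpr
      ⟨mem_fiberHyps_self hc, fun x hx =>
        Finset.card_le_one.mp hcard x hx c (mem_fiberHyps_self hc)⟩
    rw [hFc, Finset.sum_singleton, ← map_pow]
    exact map_dvd _ (hθ c (Finset.mem_of_mem_erase hc))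
  choose! a t ht hat using fun c' (hc' : c' ∈ F) =>
    exists_eq_smul_add_of_mem_fiberHyps h.1 hc'
  have hlin : ∀ x : K, linForm c + algebraMap K (S K (n+1)) x * linForm c₀
      = linForm (c + x • c₀) := fun x => by
    rw [linForm_add, linForm_smul, MvPolynomial.algebraMap_eq]
  have hdvd : ∀ c' ∈ F, linForm (c + a c' • c₀) ∣ linForm c' := fun c' hc' => by
    conv_rhs => rw [hat c' hc', linForm_smul]
    exact Dvd.intro_left _ rfl
  have hrel : ∀ c' ∈ F, ∀ c'' ∈ F, c' ≠ c'' →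
      IsRelPrime (linForm (c + a c' • c₀)) (linForm (c + a c'' • c₀)) :=
    fun c' hc' c'' hc'' hne x hx hx' =>
      A.isRelPrime (mem_hyps_of_mem_fiberHyps hc') (mem_hyps_of_mem_fiberHyps hc'') hne
        (hx.trans (hdvd c' hc')) (hx'.trans (hdvd c'' hc''))
  obtain ⟨g, hg⟩ := hθ c₀ h.1
  obtain ⟨r, s, hrs⟩ := exists_eq_prod_mul_add F a (fun c' hc' c'' hc'' heq => by
      by_contra hne
      refine A.nonparallel c' (mem_hyps_of_mem_fiberHyps hc') c''
        (mem_hyps_of_mem_fiberHyps hc'') hne (t c'' / t c') ?_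
      have h1 : (t c'' / t c') • c' = (t c'' / t c') • (t c' • (c + a c' • c₀)) :=
        congrArg _ (hat c' hc')
      rw [h1, smul_smul, div_mul_cancel₀ _ (ht c' hc'), heq]
      exact hat c'' hc'')
    m (h.sum_fiberHyps_le hc hcard) (linForm c) (linForm c₀) (θ (linForm c)) g
    (fun c' hc' c'' hc'' hne => by
      simp only [hlin]
      exact hrel c' hc' c'' hc'' hne)
    (fun c' hc' => by
      rw [hlin, ← hg]
      have h1 := (pow_dvd_pow_of_dvd (hdvd c' hc') (m c')).trans
        (hθ c' (mem_hyps_of_mem_fiberHyps hc'))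
      have h2 : θ (linForm c') = C (t c') *
          (θ (linForm c) + algebraMap K (S K (n+1)) (a c') * θ (linForm c₀)) := by
        conv_lhs => rw [hat c' hc']
        rw [linForm_smul, der_C_mul, linForm_add, linForm_smul, map_add, der_C_mul,
          MvPolynomial.algebraMap_eq]
      rw [h2] at h1
      exact (((IsUnit.mk0 _ (ht c' hc')).map C).dvd_mul_left).mp h1)
  rw [hrs, map_add, map_mul, map_mul, resHom_linForm_self, zero_mul, add_zero, map_prod]
  refine Dvd.dvd.mul_right (dvd_of_eq ?_) _
  rw [← Finset.prod_pow_eq_pow_sum]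
  refine Finset.prod_congr rfl fun c' _ => ?_
  rw [map_pow, map_add, map_mul, resHom_linForm_self, mul_zero, add_zero]

lemma Parallel.linForm_associated {b b' : Fin ℓ → K} (h : Parallel b b') :
    Associated (linForm b) (linForm b') := by
  obtain ⟨t, ht, rfl⟩ := h
  rw [linForm_smul, mul_comm]
  exact associated_mul_unit_right _ _ ((IsUnit.mk0 _ ht).map C)

lemma Arrangement.eq_of_parallel {B : Arrangement K ℓ} {b b' x y : Fin ℓ → K} (hb : b ∈ B.hyps)
    (hb' : b' ∈ B.hyps) (hx : Parallel b x) (hy : Parallel b' y) (hxy : ∃ t : K, y = t • x) :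
    b = b' := by
  obtain ⟨s, -, rfl⟩ := hx
  obtain ⟨s', hs', rfl⟩ := hy
  obtain ⟨t, ht⟩ := hxy
  by_contra hne
  refine B.nonparallel b hb b' hb' hne (s'⁻¹ * (t * s)) ?_
  rw [mul_smul, mul_smul, ← ht, inv_smul_smul₀ hs']

/-- A covector restricts to a multiple of the restriction of `c` if and only if it lies in the
plane spanned by `c₀` and `c`. -/
lemma mem_span_pair_iff_resCov (hc₀ : c₀ ≠ 0) (c c' : Fin (n+1) → K) :
    c' ∈ Submodule.span K {c₀, c} ↔ ∃ t : K, resCov c₀ e c' = t • resCov c₀ e c := by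
  simp only [← resCovHom_apply]
  rw [Submodule.mem_span_pair]
  constructor
  · rintro ⟨x, y, rfl⟩
    exact ⟨y, by rw [map_add, map_smul, map_smul, resCovHom_self, smul_zero, zero_add]⟩
  · rintro ⟨t, ht⟩
    obtain ⟨s, hs⟩ := exists_eq_smul_of_resCovHom_eq_zero e hc₀ (c := c' - t • c)
      (by rw [map_sub, map_smul, ht, sub_self])
    exact ⟨s, t, by rw [← hs]; abel⟩

/-- The restriction of the defining polynomial without its factor at `c₀` is the defining
polynomial of the Euler–Ziegler restriction, up to a unit. -/
lemma associated_resHom_prod {A : Arrangement K (n+1)} {m : (Fin (n+1) → K) → ℕ}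
    (hc₀ : c₀ ∈ A.hyps) {B : Arrangement K n} {mB : (Fin n → K) → ℕ}
    (h₁ : ∀ c ∈ A.hyps.erase c₀, ∃ b ∈ B.hyps,
        Parallel b (resCov c₀ e c) ∧ mB b = EZmult A m c₀ c)
    (h₂ : ∀ b ∈ B.hyps, ∃ c ∈ A.hyps.erase c₀, Parallel b (resCov c₀ e c)) :
    Associated (definingPoly B mB)
      (resHom e (∏ c ∈ A.hyps.erase c₀, linForm c ^ m c)) := by
  choose! β hβ hpar hmult using h₁
  rw [map_prod, ← Finset.prod_fiberwise_of_maps_to hβ, definingPoly]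
  refine Associated.prod _ _ _ fun b hb => ?_
  obtain ⟨c, hc, hbc⟩ := h₂ b hb
  have hβc : b = β c :=
    Arrangement.eq_of_parallel hb (hβ c hc) hbc (hpar c hc) ⟨1, (one_smul _ _).symm⟩
  have hfiber : {c' ∈ A.hyps.erase c₀ | β c' = b} = fiberHyps A c₀ c := by
    ext c'
    simp only [fiberHyps, locHyps, Finset.mem_filter, Finset.mem_erase]
    rw [mem_span_pair_iff_resCov e (A.ne_zero c₀ hc₀), and_assoc]
    refine and_congr_right fun hne => and_congr_right fun hA => ?_
    have hc' : c' ∈ A.hyps.erase c₀ := Finset.mem_erase.mpr ⟨hne, hA⟩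
    constructor
    · intro hb'
      obtain ⟨s, hs, hs'⟩ := hbc
      obtain ⟨s', -, hs''⟩ := hpar c' hc'
      refine ⟨s' / s, ?_⟩
      rw [hs'', hs', hb', smul_smul, div_mul_cancel₀ _ hs]
    · intro hex
      exact (Arrangement.eq_of_parallel hb (hβ c' hc') hbc (hpar c' hc') hex).symm
  rw [hfiber, hβc, hmult c hc, EZmult_eq_sum_fiberHyps m hc₀, ← Finset.prod_pow_eq_pow_sum]
  refine Associated.prod _ _ _ fun c' hc' => ?_
  rw [← hfiber] at hc'
  obtain ⟨hcA, hcb⟩ := Finset.mem_filter.mp hc'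
  rw [map_pow, resHom_linForm, ← hβc, ← hcb]
  exact (hpar c' hcA).linForm_associated.pow_pow

lemma resDer_isLogDer {A : Arrangement K (n+1)} {m : (Fin (n+1) → K) → ℕ}
    (h : IsLocallyHeavy A m c₀) (hm : 0 < m c₀) {B : Arrangement K n} {mB : (Fin n → K) → ℕ}
    (h₁ : ∀ c ∈ A.hyps.erase c₀, ∃ b ∈ B.hyps,
        Parallel b (resCov c₀ e c) ∧ mB b = EZmult A m c₀ c)
    (h₂ : ∀ b ∈ B.hyps, ∃ c ∈ A.hyps.erase c₀, Parallel b (resCov c₀ e c))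
    {θ : Der K (n+1)} (hθ : IsLogDer A m θ) : IsLogDer B mB (resDer e θ) := by
  intro b hb
  obtain ⟨c, hc, hbc⟩ := h₂ b hb
  obtain ⟨b', hb', hpar, hmult⟩ := h₁ c hc
  obtain rfl : b = b' :=
    Arrangement.eq_of_parallel hb hb' hbc hpar ⟨1, (one_smul _ _).symm⟩
  have key := resHom_linForm_pow_dvd e h hθ hc
  rw [← hmult, ← resDer_linForm_resCov e (A.ne_zero c₀ h.1)
    ((dvd_pow_self _ hm.ne').trans (hθ c₀ h.1)), resHom_linForm] at key
  obtain ⟨t, ht, htb⟩ := hbc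
  refine (pow_dvd_pow_of_dvd hpar.linForm_associated.dvd _).trans (key.trans ?_)
  rw [htb, linForm_smul, der_C_mul]
  exact ((IsUnit.mk0 _ ht).map C).mul_left_dvd.mpr dvd_rfl

end Restriction

lemma coeffMatrix_det_isHomogeneous {θ : Fin ℓ → Der K ℓ} {d : Fin ℓ → ℕ}
    (hθ : ∀ i, IsHomogOfDeg (θ i) (d i)) : (coeffMatrix θ).det.IsHomogeneous (∑ i, d i) := by
  rw [← Matrix.det_transpose, Matrix.det_apply]
  refine IsHomogeneous.sum _ _ _ fun σ _ => ?_
  have h : (∏ i, (coeffMatrix θ).transpose (σ i) i).IsHomogeneous (∑ i, d i) :=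
    IsHomogeneous.prod _ _ _ fun i _ => by
      have := hθ i (Pi.single (σ i) 1)
      rwa [linForm_single] at this
  rcases Int.units_eq_one_or (Equiv.Perm.sign σ) with hs | hs
  · rw [hs, one_smul]
    exact h
  · rw [hs, Units.neg_smul, one_smul]
    exact h.neg

/-- From a homogeneous basis of a multiarrangement with a locally heavy hyperplane, one element has
degree `m c₀` and the others restrict to a homogeneous basis of the Euler–Ziegler restriction. -/
lemma exists_isFreeWithExp_res {n : ℕ} {A : Arrangement K (n+1)} {m : (Fin (n+1) → K) → ℕ}
    {c₀ : Fin (n+1) → K} (hm : 0 < m c₀) (hlh : IsLocallyHeavy A m c₀)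
    {B : Arrangement K n} {mB : (Fin n → K) → ℕ} (hres : IsEZRes A m c₀ B mB)
    {d : Fin (n+1) → ℕ} (hd : IsFreeWithExp A m d) :
    ∃ i, d i = m c₀ ∧ IsFreeWithExp B mB fun j => d (i.succAbove j) := by
  obtain ⟨θ, hhom, hbasis⟩ := hd
  obtain ⟨hc₀, e, h₁, h₂⟩ := hres
  have hc₀0 := A.ne_zero c₀ hc₀
  choose g hg using fun i => hbasis.1 i c₀ hc₀
  have hlog : ∀ i, IsLogDer B mB (resDer e (θ i)) := fun i =>
    resDer_isLogDer e hlh hm h₁ h₂ (hbasis.1 i)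
  choose h hh using fun i : Fin (n+1) =>
    definingPoly_dvd_det (θ := fun j => resDer e (θ (i.succAbove j))) fun j => hlog _
  set R : S K (n+1) := ∏ c ∈ A.hyps.erase c₀, linForm c ^ m c
  let N : Matrix (Fin (n+1)) (Fin (n+1)) (S K (n+1)) :=
    Matrix.of fun i j => θ i (linForm (frame e j))
  have hz : linForm c₀ ^ m c₀ ≠ 0 := pow_ne_zero _ (linForm_ne_zero hc₀0)
  have hdet : N.det = linForm c₀ ^ m c₀ *
      ∑ i : Fin (n+1), (-1) ^ (i : ℕ) * g i * (N.submatrix i.succAbove Fin.succ).det := by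
    rw [Matrix.det_succ_column_zero, Finset.mul_sum]
    refine Finset.sum_congr rfl fun i _ => ?_
    have : N i 0 = linForm c₀ ^ m c₀ * g i := hg i
    rw [this]
    ring
  have hassoc : Associated R
      (∑ i : Fin (n+1), (-1) ^ (i : ℕ) * g i * (N.submatrix i.succAbove Fin.succ).det) := by
    have h1 : Associated (definingPoly A m) N.det := by
      refine (hbasis.associated_det ⟨c₀, hc₀⟩).trans ?_
      rw [show N.det = _ from det_linForm_frame e θ]
      exact associated_mul_unit_right _ _ ((isUnit_det_frame e hc₀0).map C)
    have h2 : definingPoly A m = linForm c₀ ^ m c₀ * R :=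
      (Finset.mul_prod_erase _ (fun c => linForm c ^ m c) hc₀).symm
    rw [h2, hdet] at h1
    exact h1.of_mul_left (Associated.refl _) hz
  have hminor : ∀ i : Fin (n+1), resHom e (N.submatrix i.succAbove Fin.succ).det
      = definingPoly B mB * h i := by
    intro i
    rw [← hh i, AlgHom.map_det]
    congr 1
    ext1 j l
    exact (resDer_X e _ l).symm
  have hunit : IsUnit (∑ i : Fin (n+1), (-1) ^ (i : ℕ) * resHom e (g i) * h i) := by
    have h1 := (associated_resHom_prod e hc₀ h₁ h₂).trans (hassoc.map (resHom e))
    have h2 : resHom e (∑ i : Fin (n+1), (-1) ^ (i : ℕ) * g i *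
        (N.submatrix i.succAbove Fin.succ).det) = definingPoly B mB *
        ∑ i : Fin (n+1), (-1) ^ (i : ℕ) * resHom e (g i) * h i := by
      rw [map_sum, Finset.mul_sum]
      refine Finset.sum_congr rfl fun i _ => ?_
      rw [map_mul, map_mul, hminor]
      simp only [map_pow, map_neg, map_one]
      ring
    rw [h2] at h1
    obtain ⟨u, hu⟩ := h1
    rw [← mul_left_cancel₀ (definingPoly_ne_zero B mB) hu]
    exact u.isUnit
  have hne := (hunit.map constantCoeff).ne_zero
  rw [map_sum] at hne
  obtain ⟨i, -, hi⟩ := Finset.exists_ne_zero_of_sum_ne_zero hne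
  rw [map_mul, map_mul, constantCoeff_resHom] at hi
  have hgi : constantCoeff (g i) ≠ 0 := right_ne_zero_of_mul (left_ne_zero_of_mul hi)
  have hhi : constantCoeff (h i) ≠ 0 := right_ne_zero_of_mul hi
  refine ⟨i, ?_, fun j => resDer e (θ (i.succAbove j)),
    fun j => resDer_isHomogOfDeg e (hhom _), isDerBasis_of_det (fun j => hlog _) ?_⟩
  · have hp : (linForm c₀ ^ m c₀).IsHomogeneous (m c₀) := by
      simpa using (linForm_isHomogeneous c₀).pow (m c₀)
    exact (eq_C_of_isHomogeneous_mul hp hz (hg i ▸ hhom i c₀) hgi).1.symm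
  · have hhom' : (coeffMatrix fun j => resDer e (θ (i.succAbove j))).det.IsHomogeneous
        (∑ j, d (i.succAbove j)) :=
      coeffMatrix_det_isHomogeneous fun j => resDer_isHomogOfDeg e (hhom _)
    rw [hh i] at hhom' ⊢
    have hC := (eq_C_of_isHomogeneous_mul (definingPoly_isHomogeneous B mB)
      (definingPoly_ne_zero B mB) hhom' hhi).2
    rw [hC]
    exact associated_mul_unit_right _ _ ((IsUnit.mk0 _ hhi).map C)

theorem stmt5 {n : ℕ} (A : Arrangement K (n+1)) (m : (Fin (n+1) → K) → ℕ)
    (hm : ∀ c ∈ A.hyps, 0 < m c) (c₀ : Fin (n+1) → K) (hlh : IsLocallyHeavy A m c₀)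
    (B : Arrangement K n) (mB : (Fin n → K) → ℕ) (hres : IsEZRes A m c₀ B mB)
    (hfree : IsFree A m) :
    IsFree B mB ∧ ∀ d : Fin (n+1) → ℕ, IsFreeWithExp A m d →
      ∃ d' : Fin n → ℕ, IsFreeWithExp B mB d' ∧
        Finset.univ.val.map d = m c₀ ::ₘ Finset.univ.val.map d' := by
  have key : ∀ d : Fin (n+1) → ℕ, IsFreeWithExp A m d →
      ∃ d' : Fin n → ℕ, IsFreeWithExp B mB d' ∧
        Finset.univ.val.map d = m c₀ ::ₘ Finset.univ.val.map d' := by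
    intro d hd
    obtain ⟨i, hi, hfi⟩ := exists_isFreeWithExp_res (hm c₀ hlh.1) hlh hres hd
    refine ⟨_, hfi, ?_⟩
    rw [Fin.univ_succAbove n i, Finset.cons_val, Multiset.map_cons, hi, Finset.map_val,
      Multiset.map_map]
    rfl
  obtain ⟨d, hd⟩ := hfree
  obtain ⟨d', hd', -⟩ := key d hd
  exact ⟨⟨d', hd'⟩, key⟩

end ArrPaper
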